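/- Suppose 0 < γ < √(3/2) − 1 and let (yᵗ, zᵗ, xᵗ) be generated by the DR splitting method for the feasibility problem. Define E_γ(y, z, x) := (1/2)·d_C(y)² − (1/(2γ))‖y − z‖² + (1/γ)⟨x − y, z − y⟩. Then for every t ≥ 1, E_γ(yᵗ⁺¹, zᵗ⁺¹, xᵗ⁺¹) − E_γ(yᵗ, zᵗ, xᵗ) ≤ (1/γ)·((1 + γ)² − 3/2)·‖yᵗ⁺¹ − yᵗ‖² ≤ 0; in particular t ↦ E_γ(yᵗ, zᵗ, xᵗ) is nonincreasing for t ≥ 1. -/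

import Mathlib

open Filter Topology

/-!
Write `f = ½ d_C²`, a convex function whose gradient at `a` is the residual `a - P a`. Since `P a`
is characterised by a variational inequality, `f` exceeds its linearisation at `b` by at least half
the squared difference of the residuals at `a` and `b`; in particular the residual is nonexpansive.

The `y`-update is the proximal step `x - y⁺ = γ ∇f(y⁺)`, and in each variable separately the merit
function is controlled by completing a square:
* replacing `y` by `y⁺` decreases it by at least `‖y⁺ - y‖² / (2γ) + ‖∇f(y⁺) - ∇f(y)‖² / 2`;
* replacing `z` by `z⁺` increases it by at most `(‖y⁺ - z‖² - ‖y⁺ - z⁺‖²) / γ`;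
* replacing `x` by `x⁺` increases it by exactly `‖y⁺ - z⁺‖² / γ`.

Two consecutive proximal steps give `z - y⁺ = γ (∇f(y⁺) - ∇f(y))`, so one iteration changes the
merit function by at most `(γ - ½) ‖∇f(y⁺) - ∇f(y)‖² - ‖y⁺ - y‖² / (2γ)`. Nonexpansiveness
bounds this by `(max (γ - ½) 0 - 1 / (2γ)) ‖y⁺ - y‖²`, whose coefficient is at most
`((1 + γ)² - 3/2) / γ` and is nonpositive up to `γ = 1`.
-/

section Projection

variable {V : Type*} [NormedAddCommGroup V] [InnerProductSpace ℝ V] {C : Set V} {a b p q : V}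

/-- `p` is the metric projection of `a` onto `C`, in the variational form that characterises the
projection onto a convex set. -/
def IsProjPoint (C : Set V) (a p : V) : Prop :=
  p ∈ C ∧ ∀ c ∈ C, inner ℝ (a - p) (c - p) ≤ 0

lemma isProjPoint_of_dist_le (hC : Convex ℝ C) (hp : p ∈ C)
    (hmin : ∀ c ∈ C, dist a p ≤ dist a c) : IsProjPoint C a p := by
  have : Nonempty C := ⟨⟨p, hp⟩⟩
  refine ⟨hp, (norm_eq_iInf_iff_real_inner_le_zero hC hp).1 (le_antisymm ?_ ?_)⟩
  · exact le_ciInf fun c ↦ by simpa only [dist_eq_norm] using hmin c c.2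
  · exact ciInf_le (f := fun c : C ↦ ‖a - c‖) ⟨0, by rintro _ ⟨c, rfl⟩; positivity⟩ ⟨p, hp⟩

namespace IsProjPoint

lemma dist_le (h : IsProjPoint C a p) {c : V} (hc : c ∈ C) : dist a p ≤ dist a c := by
  have hexpand : ‖a - c‖ ^ 2 = ‖a - p‖ ^ 2 - 2 * inner ℝ (a - p) (c - p) + ‖c - p‖ ^ 2 := by
    rw [← norm_sub_sq_real, sub_sub_sub_cancel_right]
  rw [dist_eq_norm, dist_eq_norm]
  refine le_of_sq_le_sq ?_ (norm_nonneg _)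
  linarith [h.2 c hc, sq_nonneg ‖c - p‖]

lemma infDist_eq (h : IsProjPoint C a p) : Metric.infDist a C = ‖a - p‖ := by
  rw [← dist_eq_norm]
  exact le_antisymm (Metric.infDist_le_dist_of_mem h.1)
    ((Metric.le_infDist ⟨p, h.1⟩).2 fun _ hc ↦ h.dist_le hc)

lemma of_sub_eq_smul (h : IsProjPoint C a p) {r : ℝ} (hr : 0 ≤ r) (hb : b - p = r • (a - p)) :
    IsProjPoint C b p := by
  refine ⟨h.1, fun c hc ↦ ?_⟩
  rw [hb, real_inner_smul_left]
  exact mul_nonpos_of_nonneg_of_nonpos hr (h.2 c hc)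

lemma half_sq_norm_add_inner_le (ha : IsProjPoint C a p) (hb : IsProjPoint C b q) :
    1 / 2 * ‖b - q‖ ^ 2 + inner ℝ (b - q) (a - b) + 1 / 2 * ‖(a - p) - (b - q)‖ ^ 2
      ≤ 1 / 2 * ‖a - p‖ ^ 2 := by
  have hab : a - b = (a - p) - (b - q) + (p - q) := by abel
  have hpq : inner ℝ (b - q) (p - q) ≤ 0 := hb.2 p ha.1
  rw [hab, inner_add_right, inner_sub_right, real_inner_self_eq_norm_sq,
    norm_sub_sq_real (a - p) (b - q), real_inner_comm (b - q) (a - p)]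
  linarith

lemma sq_norm_sub_le_inner (ha : IsProjPoint C a p) (hb : IsProjPoint C b q) :
    ‖(a - p) - (b - q)‖ ^ 2 ≤ inner ℝ ((a - p) - (b - q)) (a - b) := by
  have hab := half_sq_norm_add_inner_le ha hb
  have hba := half_sq_norm_add_inner_le hb ha
  rw [norm_sub_rev (b - q) (a - p), ← neg_sub a b, inner_neg_right] at hba
  rw [inner_sub_left]
  linarith

lemma norm_sub_sub_sub_le (ha : IsProjPoint C a p) (hb : IsProjPoint C b q) :
    ‖(a - p) - (b - q)‖ ≤ ‖a - b‖ := by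
  have hcs := (sq_norm_sub_le_inner ha hb).trans (real_inner_le_norm _ _)
  nlinarith [norm_nonneg ((a - p) - (b - q)), norm_nonneg (a - b)]

end IsProjPoint

end Projection

section Merit

variable {V : Type*} [NormedAddCommGroup V] [InnerProductSpace ℝ V] {C : Set V} {γ : ℝ}

/-- The Douglas–Rachford merit function `E_γ(y, z, x)` for the feasibility problem; the constraint
`z ∈ D` is left implicit. -/
noncomputable def drMerit (γ : ℝ) (C : Set V) (y z x : V) : ℝ :=
  1 / 2 * Metric.infDist y C ^ 2 - 1 / (2 * γ) * ‖y - z‖ ^ 2 + 1 / γ * inner ℝ (x - y) (z - y)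

lemma drMerit_add_sub (γ : ℝ) (C : Set V) (y z x : V) :
    drMerit γ C y z (x + (z - y)) = drMerit γ C y z x + 1 / γ * ‖y - z‖ ^ 2 := by
  rw [drMerit, drMerit, add_sub_right_comm, inner_add_left, real_inner_self_eq_norm_sq,
    norm_sub_rev z y]
  ring

lemma drMerit_eq_sq_norm_reflection_sub (γ : ℝ) (C : Set V) (y z x : V) :
    drMerit γ C y z x = 1 / 2 * Metric.infDist y C ^ 2
      + 1 / (2 * γ) * (‖(2 : ℝ) • y - x - z‖ ^ 2 - ‖x - y‖ ^ 2) - 1 / γ * ‖y - z‖ ^ 2 := by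
  have hsplit : (2 : ℝ) • y - x - z = -((x - y) + (z - y)) := by rw [two_smul]; abel
  rw [drMerit, hsplit, norm_neg, norm_add_sq_real, norm_sub_rev z y]
  ring

lemma drMerit_eq_sq_norm_sub (γ : ℝ) (C : Set V) (y z x : V) :
    drMerit γ C y z x = 1 / 2 * Metric.infDist y C ^ 2
      + 1 / (2 * γ) * (‖x - y‖ ^ 2 - ‖x - z‖ ^ 2) := by
  have hsplit : x - z = (x - y) - (z - y) := by abel
  rw [drMerit, hsplit, norm_sub_sq_real (x - y) (z - y), norm_sub_rev z y]
  ring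

lemma drMerit_le_of_norm_reflection_sub_le (hγ : 0 ≤ γ) {y z z' x : V}
    (hz : ‖(2 : ℝ) • y - x - z'‖ ≤ ‖(2 : ℝ) • y - x - z‖) :
    drMerit γ C y z' x ≤ drMerit γ C y z x + 1 / γ * (‖y - z‖ ^ 2 - ‖y - z'‖ ^ 2) := by
  have hsq : 1 / (2 * γ) * (‖(2 : ℝ) • y - x - z'‖ ^ 2 - ‖x - y‖ ^ 2)
      ≤ 1 / (2 * γ) * (‖(2 : ℝ) • y - x - z‖ ^ 2 - ‖x - y‖ ^ 2) := by gcongr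
  rw [drMerit_eq_sq_norm_reflection_sub, drMerit_eq_sq_norm_reflection_sub]
  linarith

lemma drMerit_le_of_prox (hγ : γ ≠ 0) {y y' p p' x : V} (hy : IsProjPoint C y p)
    (hy' : IsProjPoint C y' p') (hprox : x - y' = γ • (y' - p')) (z : V) :
    drMerit γ C y' z x ≤ drMerit γ C y z x
      - 1 / (2 * γ) * ‖y' - y‖ ^ 2 - 1 / 2 * ‖(y' - p') - (y - p)‖ ^ 2 := by
  have hthree : 1 / (2 * γ) * ‖x - y‖ ^ 2 = 1 / (2 * γ) * ‖x - y'‖ ^ 2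
      - inner ℝ (y' - p') (y - y') + 1 / (2 * γ) * ‖y' - y‖ ^ 2 := by
    rw [← sub_sub_sub_cancel_right x y y', norm_sub_sq_real, norm_sub_rev y y', hprox,
      real_inner_smul_left]
    field_simp
  have hconv := hy.half_sq_norm_add_inner_le hy'
  rw [norm_sub_rev (y - p)] at hconv
  rw [drMerit_eq_sq_norm_sub, drMerit_eq_sq_norm_sub, hy.infDist_eq, hy'.infDist_eq, mul_sub,
    mul_sub, hthree]
  linarith

end Merit

section Coefficients

variable {γ : ℝ}

lemma max_sub_one_div_nonpos (hγ : 0 < γ) (hγ' : γ ≤ 1) :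
    max (γ - 1 / 2) 0 - 1 / (2 * γ) ≤ 0 := by
  rw [sub_nonpos, max_le_iff]
  refine ⟨?_, by positivity⟩
  rw [le_div_iff₀ (by positivity)]
  nlinarith

lemma max_sub_one_div_le (hγ : 0 < γ) :
    max (γ - 1 / 2) 0 - 1 / (2 * γ) ≤ 1 / γ * ((1 + γ) ^ 2 - 3 / 2) := by
  have hexpand : 1 / γ * ((1 + γ) ^ 2 - 3 / 2) = γ + 2 - 1 / (2 * γ) := by
    field_simp
    ring
  rw [hexpand]
  gcongr
  exact max_le (by linarith) (by positivity)

lemma one_div_mul_sq_sub_nonpos (hγ : 0 < γ) (hγ' : γ ≤ √(3 / 2) - 1) :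
    1 / γ * ((1 + γ) ^ 2 - 3 / 2) ≤ 0 := by
  have hsq : (1 + γ) ^ 2 ≤ 3 / 2 := (Real.le_sqrt (by positivity) (by norm_num)).1 (by linarith)
  exact mul_nonpos_of_nonneg_of_nonpos (by positivity) (sub_nonpos.2 hsq)

lemma le_one_of_le_sqrt_sub_one (hγ : γ ≤ √(3 / 2) - 1) : γ ≤ 1 := by
  have hsqrt : √(3 / 2) ≤ 2 := Real.sqrt_le_iff.2 (by norm_num)
  linarith

end Coefficients

section Iteration

variable {V : Type*} [NormedAddCommGroup V] [InnerProductSpace ℝ V] {C D : Set V} {P : V → V}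
  {γ : ℝ} {x y z : ℕ → V}

/-- `P` is a metric projection onto `C`, given as a selection of nearest points. -/
def IsMetricProjection (C : Set V) (P : V → V) : Prop :=
  ∀ w, P w ∈ C ∧ ∀ c ∈ C, dist w (P w) ≤ dist w c

/-- `(y, z, x)` is a run of the Douglas–Rachford splitting method for finding a point of `C ∩ D`,
where `P` is the projection onto `C`. The starting point is `x 0`; the values `y 0` and `z 0` are
unconstrained. -/
structure IsDRSequence (γ : ℝ) (P : V → V) (D : Set V) (x y z : ℕ → V) : Prop where
  y_succ : ∀ t, y (t + 1) = (1 / (1 + γ)) • (x t + γ • P (x t))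
  z_succ : ∀ t, z (t + 1) ∈ D ∧
    ∀ w ∈ D, ‖(2 : ℝ) • y (t + 1) - x t - z (t + 1)‖ ≤ ‖(2 : ℝ) • y (t + 1) - x t - w‖
  x_succ : ∀ t, x (t + 1) = x t + (z (t + 1) - y (t + 1))

namespace IsDRSequence

lemma sub_y_succ (h : IsDRSequence γ P D x y z) (hγ : 1 + γ ≠ 0) (t : ℕ) :
    x t - y (t + 1) = γ • (y (t + 1) - P (x t)) := by
  rw [h.y_succ]
  match_scalars <;> field_simp <;> ring

lemma y_succ_sub_proj (h : IsDRSequence γ P D x y z) (hγ : 1 + γ ≠ 0) (t : ℕ) :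
    y (t + 1) - P (x t) = (1 / (1 + γ)) • (x t - P (x t)) := by
  rw [h.y_succ]
  match_scalars <;> field_simp
  ring

lemma isProjPoint (h : IsDRSequence γ P D x y z) (hC : Convex ℝ C) (hP : IsMetricProjection C P)
    (hγ : 0 < 1 + γ) (t : ℕ) : IsProjPoint C (y (t + 1)) (P (x t)) :=
  (isProjPoint_of_dist_le hC (hP (x t)).1 (hP (x t)).2).of_sub_eq_smul
    (one_div_pos.2 hγ).le (h.y_succ_sub_proj hγ.ne' t)

lemma z_succ_sub_y_succ_succ (h : IsDRSequence γ P D x y z) (hγ : 1 + γ ≠ 0) (t : ℕ) :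
    z (t + 1) - y (t + 1 + 1)
      = γ • ((y (t + 1 + 1) - P (x (t + 1))) - (y (t + 1) - P (x t))) := by
  rw [smul_sub, ← h.sub_y_succ hγ, ← h.sub_y_succ hγ, h.x_succ]
  abel

lemma drMerit_succ_sub_le (h : IsDRSequence γ P D x y z) (hC : Convex ℝ C)
    (hP : IsMetricProjection C P) (hγ : 0 < γ) (t : ℕ) :
    drMerit γ C (y (t + 1 + 1)) (z (t + 1 + 1)) (x (t + 1 + 1))
        - drMerit γ C (y (t + 1)) (z (t + 1)) (x (t + 1))
      ≤ (γ - 1 / 2) * ‖(y (t + 1 + 1) - P (x (t + 1))) - (y (t + 1) - P (x t))‖ ^ 2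
        - 1 / (2 * γ) * ‖y (t + 1 + 1) - y (t + 1)‖ ^ 2 := by
  have hγ1 : 0 < 1 + γ := by positivity
  have hx := drMerit_add_sub γ C (y (t + 1 + 1)) (z (t + 1 + 1)) (x (t + 1))
  have hz := drMerit_le_of_norm_reflection_sub_le (C := C) hγ.le
    ((h.z_succ (t + 1)).2 (z (t + 1)) (h.z_succ t).1)
  have hy := drMerit_le_of_prox hγ.ne' (h.isProjPoint hC hP hγ1 t)
    (h.isProjPoint hC hP hγ1 (t + 1)) (h.sub_y_succ hγ1.ne' (t + 1)) (z (t + 1))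
  have hzy : 1 / γ * ‖y (t + 1 + 1) - z (t + 1)‖ ^ 2
      = γ * ‖(y (t + 1 + 1) - P (x (t + 1))) - (y (t + 1) - P (x t))‖ ^ 2 := by
    rw [norm_sub_rev, h.z_succ_sub_y_succ_succ hγ1.ne', norm_smul, mul_pow, Real.norm_eq_abs,
      sq_abs]
    field_simp
  rw [← h.x_succ] at hx
  linarith

end IsDRSequence

theorem stmt4_general (hC : Convex ℝ C) (hγ : 0 < γ) (hP : IsMetricProjection C P)
    (h : IsDRSequence γ P D x y z) (t : ℕ) (ht : 1 ≤ t) :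
    (drMerit γ C (y (t + 1)) (z (t + 1)) (x (t + 1)) - drMerit γ C (y t) (z t) (x t)
        ≤ (max (γ - 1 / 2) 0 - 1 / (2 * γ)) * ‖y (t + 1) - y t‖ ^ 2) ∧
      (γ ≤ 1 →
        drMerit γ C (y (t + 1)) (z (t + 1)) (x (t + 1)) ≤ drMerit γ C (y t) (z t) (x t)) := by
  obtain ⟨s, rfl⟩ := Nat.exists_eq_add_of_le' ht
  have hγ1 : 0 < 1 + γ := by positivity
  have hdesc : drMerit γ C (y (s + 1 + 1)) (z (s + 1 + 1)) (x (s + 1 + 1))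
        - drMerit γ C (y (s + 1)) (z (s + 1)) (x (s + 1))
      ≤ (max (γ - 1 / 2) 0 - 1 / (2 * γ)) * ‖y (s + 1 + 1) - y (s + 1)‖ ^ 2 := calc
    _ ≤ _ := h.drMerit_succ_sub_le hC hP hγ s
    _ ≤ max (γ - 1 / 2) 0 * ‖y (s + 1 + 1) - y (s + 1)‖ ^ 2
        - 1 / (2 * γ) * ‖y (s + 1 + 1) - y (s + 1)‖ ^ 2 := by
      gcongr
      · exact le_max_left _ _
      · exact (h.isProjPoint hC hP hγ1 (s + 1)).norm_sub_sub_sub_le (h.isProjPoint hC hP hγ1 s)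
    _ = _ := (sub_mul _ _ _).symm
  exact ⟨hdesc, fun hγ' ↦ sub_nonpos.1 <| hdesc.trans <|
    mul_nonpos_of_nonpos_of_nonneg (max_sub_one_div_nonpos hγ hγ') (sq_nonneg _)⟩

end Iteration

theorem stmt4 {n : ℕ}
    (C D : Set (EuclideanSpace ℝ (Fin n)))
    (hCne : C.Nonempty) (hCclosed : IsClosed C) (hCconv : Convex ℝ C)
    (hDne : D.Nonempty) (hDclosed : IsClosed D)
    (γ : ℝ) (hγ : 0 < γ) (hγ' : γ < Real.sqrt (3 / 2) - 1)
    (pC : EuclideanSpace ℝ (Fin n) → EuclideanSpace ℝ (Fin n))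
    (hpC : ∀ w, pC w ∈ C ∧ ∀ c ∈ C, dist w (pC w) ≤ dist w c)
    (x y z : ℕ → EuclideanSpace ℝ (Fin n))
    (hy : ∀ t, y (t + 1) = (1 / (1 + γ)) • (x t + γ • pC (x t)))
    (hz : ∀ t, z (t + 1) ∈ D ∧
      ∀ w ∈ D, ‖(2 : ℝ) • y (t + 1) - x t - z (t + 1)‖ ≤ ‖(2 : ℝ) • y (t + 1) - x t - w‖)
    (hx : ∀ t, x (t + 1) = x t + (z (t + 1) - y (t + 1)))
    (E : EuclideanSpace ℝ (Fin n) → EuclideanSpace ℝ (Fin n) → EuclideanSpace ℝ (Fin n) → ℝ)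
    (hE : ∀ a b c, E a b c
        = 1 / 2 * Metric.infDist a C ^ 2 - 1 / (2 * γ) * ‖a - b‖ ^ 2
          + 1 / γ * (inner ℝ (c - a) (b - a) : ℝ)) :
    ∀ t, 1 ≤ t →
      (E (y (t + 1)) (z (t + 1)) (x (t + 1)) - E (y t) (z t) (x t)
          ≤ 1 / γ * ((1 + γ) ^ 2 - 3 / 2) * ‖y (t + 1) - y t‖ ^ 2) ∧
      (1 / γ * ((1 + γ) ^ 2 - 3 / 2) * ‖y (t + 1) - y t‖ ^ 2 ≤ 0) ∧
      E (y (t + 1)) (z (t + 1)) (x (t + 1)) ≤ E (y t) (z t) (x t) := by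
  obtain rfl : E = drMerit γ C := by funext a b c; exact hE a b c
  intro t ht
  obtain ⟨hdesc, hmono⟩ := stmt4_general hCconv hγ hpC ⟨hy, hz, hx⟩ t ht
  exact ⟨hdesc.trans (mul_le_mul_of_nonneg_right (max_sub_one_div_le hγ) (sq_nonneg _)),
    mul_nonpos_of_nonpos_of_nonneg (one_div_mul_sq_sub_nonpos hγ hγ'.le) (sq_nonneg _),
    hmono (le_one_of_le_sqrt_sub_one hγ'.le)⟩
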